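/- Let (W,S) be a Coxeter system with S finite. Let J ⊆ S be irreducible, 2-spherical and non-spherical, let K ⊆ J be spherical, and let m ∈ S∖(J∪J⊥) be such that m is not adjacent to any element of J∖K, m commutes with every element of K, and J∪{m} is twist-rigid. Then K is a maximal spherical subset of J, i.e. there is no spherical subset L with K ⊊ L ⊆ J. -/

import Mathlib

variable {B : Type*} {W : Type*} [Group W] {M : CoxeterMatrix B}

/-- A subset `J` of the index set is *spherical* if the corresponding simple reflections
generate a finite subgroup. -/
def Spherical (cs : CoxeterSystem M W) (J : Set B) : Prop :=
  (Subgroup.closure (cs.simple '' J) : Set W).Finite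

/-- Two indices are *adjacent* if the corresponding simple reflections generate a finite
subgroup. -/
def Adjacent (cs : CoxeterSystem M W) (i j : B) : Prop :=
  (Subgroup.closure {cs.simple i, cs.simple j} : Set W).Finite

/-- A subset is *2-spherical* if every pair of its elements is adjacent. -/
def TwoSpherical (cs : CoxeterSystem M W) (J : Set B) : Prop :=
  ∀ i ∈ J, ∀ j ∈ J, Adjacent cs i j

/-- A subset is *irreducible* if it cannot be partitioned into two nonempty subsets whose
corresponding simple reflections commute elementwise. -/
def IrreducibleSubset (cs : CoxeterSystem M W) (J : Set B) : Prop :=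
  ¬ ∃ K L : Set B, K.Nonempty ∧ L.Nonempty ∧ Disjoint K L ∧ K ∪ L = J ∧
      ∀ k ∈ K, ∀ l ∈ L, Commute (cs.simple k) (cs.simple l)

/-- `perpIn cs T J` is the set `J⊥` of elements of `T ∖ J` whose simple reflections commute
with those of every element of `J`. -/
def perpIn (cs : CoxeterSystem M W) (T J : Set B) : Set B :=
  {i ∈ T \ J | ∀ j ∈ J, Commute (cs.simple i) (cs.simple j)}

/-- A subset `T` of the index set is *connected* if any two of its elements are joined by a
path inside `T` whose edges are adjacent pairs. -/
def ConnectedIn (cs : CoxeterSystem M W) (T : Set B) : Prop :=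
  ∀ a ∈ T, ∀ b ∈ T,
    Relation.ReflTransGen (fun x y => x ∈ T ∧ y ∈ T ∧ Adjacent cs x y) a b

/-- A subset `T` is *twist-rigid* if for every irreducible spherical subset `L ⊆ T` the set
`T ∖ (L ∪ L⊥)` is connected, where `L⊥` is taken inside `T`. -/
def TwistRigidIn (cs : CoxeterSystem M W) (T : Set B) : Prop :=
  ∀ L ⊆ T, IrreducibleSubset cs L → Spherical cs L →
    ConnectedIn cs (T \ (L ∪ perpIn cs T L))

/-- A pair `(s, w)` is a *base* if `ℓ(w⁻¹ s w) = 2 ℓ(w) + 1` and every reflection `t` with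
`ℓ(t w) < ℓ(w)` generates together with `s` a finite subgroup. -/
def IsBase (cs : CoxeterSystem M W) (s : B) (w : W) : Prop :=
  cs.length (w⁻¹ * cs.simple s * w) = 2 * cs.length w + 1 ∧
    ∀ t : W, cs.IsReflection t → cs.length (t * w) < cs.length w →
      (Subgroup.closure {cs.simple s, t} : Set W).Finite

/-- `J` is the *support* of `(s, w)` if it is the smallest subset of the index set containing
`s` with `w ∈ W_J`. -/
def IsSupport (cs : CoxeterSystem M W) (s : B) (w : W) (J : Set B) : Prop :=
  s ∈ J ∧ w ∈ Subgroup.closure (cs.simple '' J) ∧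
    ∀ J' : Set B, s ∈ J' → w ∈ Subgroup.closure (cs.simple '' J') → J ⊆ J'

/-- A base `(s, w)` is *simple* if `w` is represented by a reduced word whose letters are
pairwise distinct and distinct from `s`. -/
def IsSimpleBase (cs : CoxeterSystem M W) (s : B) (w : W) : Prop :=
  IsBase cs s w ∧ ∃ l : List B, w = cs.wordProd l ∧ cs.length w = l.length ∧
    l.Nodup ∧ s ∉ l

/-- The *shadow* of a base `(s, w)` with support `J`: the set of `j ∈ J` with
`ℓ((wj)⁻¹ s (wj)) ≤ ℓ(w⁻¹ s w)`. -/
def shadow (cs : CoxeterSystem M W) (s : B) (w : W) (J : Set B) : Set B :=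
  {j ∈ J | cs.length ((w * cs.simple j)⁻¹ * cs.simple s * (w * cs.simple j)) ≤
    cs.length (w⁻¹ * cs.simple s * w)}

/-!
Suppose `K ⊂ L ⊆ J` with `L` spherical, pick `j ∈ L ∖ K`, and let `C` be the irreducible component
of `L` containing `j`. Then `C` is irreducible and spherical, so twist-rigidity says that
`(J ∪ {m}) ∖ (C ∪ C⊥)` is connected. It contains `m`, which is not adjacent to `j` and hence does
not commute with it. It also contains an element of `J`, since `J` is irreducible and `C ≠ J`, the
latter being non-spherical.
But the only neighbours of `m` in `J` lie in `K ⊆ L`, and every element of `L` is in `C ∪ C⊥`: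
so `m` is isolated in a connected set with another element, a contradiction.
-/

theorem finite_closure_pair_of_commute {G : Type*} [Group G] {a b : G} (hab : Commute a b)
    (ha : IsOfFinOrder a) (hb : IsOfFinOrder b) :
    (Subgroup.closure {a, b} : Set G).Finite := by
  have hcomm (x : Subgroup.zpowers a) (y : Subgroup.zpowers b) :
      Commute ((Subgroup.zpowers a).subtype x) ((Subgroup.zpowers b).subtype y) := by
    obtain ⟨_, m, rfl⟩ := x
    obtain ⟨_, n, rfl⟩ := y
    exact hab.zpow_zpow m n
  have := ha.finite_zpowers.to_subtype
  have := hb.finite_zpowers.to_subtype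
  have hrange : Subgroup.closure {a, b} = (MonoidHom.noncommCoprod
      (Subgroup.zpowers a).subtype (Subgroup.zpowers b).subtype hcomm).range := by
    rw [MonoidHom.noncommCoprod_range, Subgroup.range_subtype, Subgroup.range_subtype,
      Subgroup.zpowers_eq_closure, Subgroup.zpowers_eq_closure, ← Subgroup.closure_union,
      Set.singleton_union]
  rw [hrange, MonoidHom.coe_range]
  exact Set.finite_range _

section CoxeterDiagram

variable {cs : CoxeterSystem M W}

theorem adjacent_of_commute {i j : B} (h : Commute (cs.simple i) (cs.simple j)) :
    Adjacent cs i j :=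
  have isOfFinOrder_simple (k : B) : IsOfFinOrder (cs.simple k) :=
    isOfFinOrder_iff_pow_eq_one.mpr ⟨2, two_pos, cs.simple_sq k⟩
  finite_closure_pair_of_commute h (isOfFinOrder_simple i) (isOfFinOrder_simple j)

theorem Spherical.subset {J L : Set B} (hJ : Spherical cs J) (hLJ : L ⊆ J) : Spherical cs L :=
  Set.Finite.subset hJ (Subgroup.closure_mono (Set.image_mono hLJ))

theorem Spherical.adjacent {L : Set B} (hL : Spherical cs L) {i j : B} (hi : i ∈ L) (hj : j ∈ L) :
    Adjacent cs i j := by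
  have hpair : Spherical cs {i, j} := hL.subset (Set.pair_subset hi hj)
  rwa [Spherical, Set.image_pair] at hpair

theorem IrreducibleSubset.exists_notMem_union_perpIn {J C : Set B} (hJ : IrreducibleSubset cs J)
    (hC : C.Nonempty) (hCJ : C ⊂ J) (T : Set B) : ∃ b ∈ J, b ∉ C ∪ perpIn cs T C := by
  by_contra! hperp
  have hcomm : ∀ c ∈ C, ∀ b ∈ J \ C, Commute (cs.simple c) (cs.simple b) := fun c hc b hb =>
    (((hperp b hb.1).resolve_left hb.2).2 c hc).symm
  exact hJ ⟨C, J \ C, hC, Set.nonempty_of_ssubset hCJ, Set.disjoint_sdiff_right,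
    Set.union_sdiff_cancel hCJ.subset, hcomm⟩

theorem ConnectedIn.eq_of_isolated {T : Set B} (hT : ConnectedIn cs T) {a b : B} (ha : a ∈ T)
    (hb : b ∈ T) (hisolated : ∀ c ∈ T, Adjacent cs a c → c = a) : b = a := by
  induction hT a ha b hb with
  | refl => rfl
  | tail _ hstep ih =>
    obtain ⟨hx, hy, hxy⟩ := hstep
    obtain rfl := ih hx
    exact hisolated _ hy hxy

/-- The irreducible component of `j` in `L`, i.e. the connected component of `j` in the Coxeter
diagram restricted to `L`, whose edges are the non-commuting pairs. Only the endpoint of each step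
is required to lie in `L`, so the notion is meant for `j ∈ L`. -/
def diagramComponent (cs : CoxeterSystem M W) (L : Set B) (j : B) : Set B :=
  {x | Relation.ReflTransGen
    (fun y z => z ∈ L ∧ ¬ Commute (cs.simple y) (cs.simple z)) j x}

section diagramComponent

variable {L : Set B} {j : B}

theorem mem_diagramComponent_self : j ∈ diagramComponent cs L j :=
  Relation.ReflTransGen.refl

theorem diagramComponent_subset (hj : j ∈ L) : diagramComponent cs L j ⊆ L := by
  intro x hx
  obtain rfl | ⟨_, _, hxL, _⟩ := Relation.ReflTransGen.cases_tail hx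
  exacts [hj, hxL]

theorem subset_diagramComponent_union_perpIn {T : Set B} (hLT : L ⊆ T) :
    L ⊆ diagramComponent cs L j ∪ perpIn cs T (diagramComponent cs L j) := by
  intro x hxL
  refine or_iff_not_imp_left.mpr fun hx => ⟨⟨hLT hxL, hx⟩, fun y hy => ?_⟩
  by_contra hxy
  exact hx (Relation.ReflTransGen.tail hy ⟨hxL, fun hyx => hxy hyx.symm⟩)

theorem diagramComponent_subset_of_commute {P Q : Set B}
    (hPQ : diagramComponent cs L j ⊆ P ∪ Q)
    (hcomm : ∀ p ∈ P, ∀ q ∈ Q, Commute (cs.simple p) (cs.simple q)) (hj : j ∈ P) :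
    diagramComponent cs L j ⊆ P := by
  intro x hx
  induction hx with
  | refl => exact hj
  | tail hy hyz ihP => exact (hPQ (hy.tail hyz)).resolve_right fun hzQ => hyz.2 (hcomm _ ihP _ hzQ)

theorem irreducibleSubset_diagramComponent :
    IrreducibleSubset cs (diagramComponent cs L j) := by
  rintro ⟨P, Q, ⟨p, hp⟩, ⟨q, hq⟩, hdisj, hPQ, hcomm⟩
  have hj : j ∈ P ∪ Q := hPQ ▸ mem_diagramComponent_self
  rcases hj with hjP | hjQ
  · have hCP := diagramComponent_subset_of_commute hPQ.ge hcomm hjP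
    exact hdisj.notMem_of_mem_left (hCP (hPQ ▸ Or.inr hq)) hq
  · have hCQ := diagramComponent_subset_of_commute (Set.union_comm P Q ▸ hPQ.ge)
      (fun q hq p hp => (hcomm p hp q hq).symm) hjQ
    exact hdisj.notMem_of_mem_left hp (hCQ (hPQ ▸ Or.inl hp))

end diagramComponent

theorem maximal_spherical_of_avoiding_shadow_general {J K : Set B} {m : B}
    (hJirr : IrreducibleSubset cs J) (hJns : ¬ Spherical cs J)
    (hadj : ∀ j ∈ J \ K, ¬ Adjacent cs m j) (htr : TwistRigidIn cs (J ∪ {m})) :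
    ¬ ∃ L : Set B, K ⊂ L ∧ L ⊆ J ∧ Spherical cs L := by
  rintro ⟨L, hKL, hLJ, hL⟩
  obtain ⟨j, hjL, hjK⟩ := Set.exists_of_ssubset hKL
  have hmj : ¬ Adjacent cs m j := hadj j ⟨hLJ hjL, hjK⟩
  have hmL : m ∉ L := fun hmL => hmj (hL.adjacent hmL hjL)
  have hmJ : m ∉ J := fun hmJ =>
    hadj m ⟨hmJ, fun hmK => hmL (hKL.subset hmK)⟩ (adjacent_of_commute (Commute.refl _))
  set C := diagramComponent cs L j
  have hjC : j ∈ C := mem_diagramComponent_self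
  have hCL : C ⊆ L := diagramComponent_subset hjL
  have hC : Spherical cs C := hL.subset hCL
  have hCJ : C ⊂ J := (hCL.trans hLJ).ssubset_of_ne fun h => hJns (h ▸ hC)
  have hJT : J ⊆ J ∪ {m} := Set.subset_union_left
  have hT : ConnectedIn cs ((J ∪ {m}) \ (C ∪ perpIn cs (J ∪ {m}) C)) :=
    htr C (hCJ.subset.trans hJT) irreducibleSubset_diagramComponent hC
  have hmT : m ∉ C ∪ perpIn cs (J ∪ {m}) C := not_or.mpr
    ⟨fun hmC => hmL (hCL hmC), fun hperp => hmj (adjacent_of_commute (hperp.2 j hjC))⟩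
  obtain ⟨b, hbJ, hbT⟩ := hJirr.exists_notMem_union_perpIn ⟨j, hjC⟩ hCJ (J ∪ {m})
  have hLT : L ⊆ C ∪ perpIn cs (J ∪ {m}) C :=
    subset_diagramComponent_union_perpIn (hLJ.trans hJT)
  have hbm : b = m := hT.eq_of_isolated ⟨Or.inr rfl, hmT⟩ ⟨hJT hbJ, hbT⟩ fun x hx hmx =>
    hx.1.resolve_left fun hxJ => hadj x ⟨hxJ, fun hxK => hx.2 (hLT (hKL.subset hxK))⟩ hmx
  exact hmJ (hbm ▸ hbJ)

end CoxeterDiagram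

/-- In the second case of the avoiding-shadow lemma, `K` is a maximal
spherical subset of `J`. -/
theorem maximal_spherical_of_avoiding_shadow
    [Finite B] (cs : CoxeterSystem M W)
    (J : Set B) (hJirr : IrreducibleSubset cs J) (hJ2 : TwoSpherical cs J)
    (hJns : ¬ Spherical cs J)
    (K : Set B) (hKJ : K ⊆ J) (hKsph : Spherical cs K)
    (m : B) (hm : m ∉ J ∪ perpIn cs Set.univ J)
    (hadj : ∀ j ∈ J \ K, ¬ Adjacent cs m j)
    (hcomm : ∀ k ∈ K, Commute (cs.simple m) (cs.simple k))
    (htr : TwistRigidIn cs (J ∪ {m})) :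
    ¬ ∃ L : Set B, K ⊂ L ∧ L ⊆ J ∧ Spherical cs L := by
  exact maximal_spherical_of_avoiding_shadow_general hJirr hJns hadj htr
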